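/- Let T_a be the random trigonometric polynomial of degree n with a ~ N(0, I_N), N = 2n+1. Then E[‖T_a‖_∞ / ‖T_a‖_p] ≍ (log N)^{1/2} for each 1 ≤ p < ∞, and E[‖T_a‖_q / ‖T_a‖_∞] ≍ (log N)^{-1/2} for each 1 ≤ q < ∞, with implied constants independent of n. -/

import Mathlib

open MeasureTheory ProbabilityTheory Real

/-- The random trigonometric polynomial
`T_a(x) = a₁ + ∑_{k=1}^n (a_{2k} √2 cos kx + a_{2k+1} √2 sin kx)`. -/
noncomputable def trigPoly (n : ℕ) (a : Fin (2 * n + 1) → ℝ) (x : ℝ) : ℝ :=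
  a ⟨0, by omega⟩ + ∑ k : Fin n,
    (a ⟨2 * k.1 + 1, by have := k.2; omega⟩ * Real.sqrt 2 * Real.cos ((k.1 + 1 : ℝ) * x)
      + a ⟨2 * k.1 + 2, by have := k.2; omega⟩ * Real.sqrt 2 * Real.sin ((k.1 + 1 : ℝ) * x))

/-- The normalized `L^p` norm on the torus `[0, 2π]`, for `1 ≤ p < ∞`. -/
noncomputable def torusLpNorm (p : ℝ) (f : ℝ → ℝ) : ℝ :=
  ((2 * π)⁻¹ * ∫ x in (0 : ℝ)..(2 * π), |f x| ^ p) ^ (1 / p)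

/-- The sup norm of a function on `[0, 2π]`. -/
noncomputable def supNorm (f : ℝ → ℝ) : ℝ :=
  ⨆ x : Set.Icc (0 : ℝ) (2 * π), |f x.1|

/-!
Write `N = 2n + 1` and `W = T_a / √N`. For every shift `s`, evaluating `W` at the `N` equally spaced
points starting at `s` is an orthogonal map of the coefficients, so these `N` values are i.i.d.
standard Gaussians. Since `W` is Lipschitz with constant `N² ‖W‖_∞`, it stays above half its maximum
on a set of measure `≳ N⁻²`, so Gaussian exponential moments give `E ‖W‖_∞² ≲ log N`; the maximum of
`N` independent Gaussians is below `√(log N) / 2` with probability `≲ N ^ (-3/4)`.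
Writing `‖W‖_p ^ p` as the average over `s` of the sample means of `|W| ^ p`, Jensen's inequality in
`s` and AM-GM over the samples bound `‖W‖_p ^ (-r)` by the average over `s` of
`∏ |W(x_j)| ^ (-r / N)`, whose expectation is bounded uniformly in `N`. These estimates yield both
upper bounds, and each lower bound is Jensen's inequality applied to the reciprocal ratio.
-/

open scoped Matrix

section Jensen

variable {Ω : Type*} [MeasurableSpace Ω] {μ : Measure Ω}

lemma one_sub_mul_le_rpow_neg {x : ℝ} (hx : 0 < x) {r : ℝ} (hr : 0 ≤ r) :
    1 - r * (x - 1) ≤ x ^ (-r) := by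
  calc 1 - r * (x - 1) ≤ Real.log x * -r + 1 := by
        nlinarith [Real.log_le_sub_one_of_pos hx]
    _ ≤ x ^ (-r) := by
        rw [Real.rpow_def_of_pos hx]
        exact Real.add_one_le_exp _

lemma integral_pos_of_ae_pos [IsProbabilityMeasure μ] {X : Ω → ℝ} (hX : Integrable X μ)
    (hX0 : ∀ᵐ ω ∂μ, 0 < X ω) : 0 < ∫ ω, X ω ∂μ := by
  obtain ⟨ω, hω, hle⟩ := exists_notMem_null_le_integral hX hX0
  exact (not_not.1 hω).trans_le hle

lemma rpow_neg_integral_le_integral [IsProbabilityMeasure μ] {X Y : Ω → ℝ} {r : ℝ} (hr : 0 ≤ r)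
    (hX : Integrable X μ) (hY : Integrable Y μ) (hX0 : ∀ᵐ ω ∂μ, 0 < X ω)
    (hXY : ∀ᵐ ω ∂μ, X ω ^ (-r) ≤ Y ω) :
    (∫ ω, X ω ∂μ) ^ (-r) ≤ ∫ ω, Y ω ∂μ := by
  have hE : 0 < ∫ ω, X ω ∂μ := integral_pos_of_ae_pos hX hX0
  set E := ∫ ω, X ω ∂μ with hE_def
  have tangent : ∀ᵐ ω ∂μ, E ^ (-r) * (1 - r * (X ω / E - 1)) ≤ Y ω := by
    filter_upwards [hX0, hXY] with ω hpos hle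
    calc E ^ (-r) * (1 - r * (X ω / E - 1))
        ≤ E ^ (-r) * (X ω / E) ^ (-r) := by
          gcongr
          exact one_sub_mul_le_rpow_neg (by positivity) hr
      _ = X ω ^ (-r) := by
          rw [← Real.mul_rpow hE.le (by positivity), mul_div_cancel₀ _ hE.ne']
      _ ≤ Y ω := hle
  have hint : Integrable (fun ω => 1 - r * (X ω / E - 1)) μ := by fun_prop
  calc E ^ (-r) = ∫ ω, E ^ (-r) * (1 - r * (X ω / E - 1)) ∂μ := by
        rw [integral_const_mul, integral_sub (by fun_prop) (by fun_prop), integral_const_mul,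
          integral_sub (by fun_prop) (by fun_prop), integral_div, ← hE_def, div_self hE.ne']
        simp
    _ ≤ ∫ ω, Y ω ∂μ := integral_mono_ae (hint.const_mul _) hY tangent

lemma integral_rpow_inv_pow_le [IsProbabilityMeasure μ] {Y : Ω → ℝ} {m k : ℕ} (hm : 0 < m)
    (hmk : m ≤ k) (hY : 0 ≤ Y) (hYm : Integrable (fun ω => Y ω ^ (m : ℝ)⁻¹) μ)
    (hYk : Integrable (fun ω => Y ω ^ (k : ℝ)⁻¹) μ) :
    (∫ ω, Y ω ^ (k : ℝ)⁻¹ ∂μ) ^ k ≤ (∫ ω, Y ω ^ (m : ℝ)⁻¹ ∂μ) ^ m := by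
  have hm0 : (0 : ℝ) < m := by exact_mod_cast hm
  have hmk' : (m : ℝ) ≤ k := by exact_mod_cast hmk
  have hk0 : (0 : ℝ) < k := hm0.trans_le hmk'
  have hpow : ∀ ω, (Y ω ^ (m : ℝ)⁻¹) ^ ((m : ℝ) / k) = Y ω ^ (k : ℝ)⁻¹ := fun ω => by
    rw [← Real.rpow_mul (hY ω)]
    congr 1
    field_simp
  have hm_nonneg : 0 ≤ ∫ ω, Y ω ^ (m : ℝ)⁻¹ ∂μ :=
    integral_nonneg fun ω => Real.rpow_nonneg (hY ω) _
  have jensen : ∫ ω, Y ω ^ (k : ℝ)⁻¹ ∂μ ≤ (∫ ω, Y ω ^ (m : ℝ)⁻¹ ∂μ) ^ ((m : ℝ) / k) := by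
    have hexp : 0 ≤ (m : ℝ) / k := by positivity
    simp_rw [← hpow] at hYk ⊢
    exact (Real.concaveOn_rpow hexp ((div_le_one hk0).2 hmk')).le_map_integral
      (Real.continuous_rpow_const hexp).continuousOn isClosed_Ici
      (Filter.Eventually.of_forall fun ω => Real.rpow_nonneg (hY ω) _) hYm hYk
  calc (∫ ω, Y ω ^ (k : ℝ)⁻¹ ∂μ) ^ k ≤ ((∫ ω, Y ω ^ (m : ℝ)⁻¹ ∂μ) ^ ((m : ℝ) / k)) ^ k := by
        gcongr
        exact integral_nonneg fun ω => Real.rpow_nonneg (hY ω) _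
    _ = (∫ ω, Y ω ^ (m : ℝ)⁻¹ ∂μ) ^ m := by
        rw [← Real.rpow_mul_natCast hm_nonneg, div_mul_cancel₀ _ hk0.ne', Real.rpow_natCast]

end Jensen

section ExpectedRatio

variable {Ω : Type*} [MeasurableSpace Ω] {μ : Measure Ω} {X Y : Ω → ℝ}

lemma div_le_half_sq_div_add_mul_rpow {x y w : ℝ} (hy : 0 ≤ y) (hw : 0 < w) :
    x / y ≤ (x ^ 2 / w + w * y ^ (-2 : ℝ)) / 2 := by
  have hsq : 0 ≤ (x - w * y⁻¹) ^ 2 / w := by positivity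
  have hexpand : (x - w * y⁻¹) ^ 2 / w = x ^ 2 / w + w * (y⁻¹) ^ 2 - 2 * (x * y⁻¹) := by
    field_simp
    ring
  rw [Real.rpow_neg hy, Real.rpow_two, ← inv_pow, div_eq_mul_inv x]
  linarith

lemma integral_div_le_half_sq_div_add_mul_rpow (hX : AEStronglyMeasurable X μ)
    (hY : AEStronglyMeasurable Y μ) (hX0 : 0 ≤ X) (hY0 : 0 ≤ Y)
    (hX2 : Integrable (fun ω => X ω ^ 2) μ) (hY2 : Integrable (fun ω => Y ω ^ (-2 : ℝ)) μ)
    {w : ℝ} (hw : 0 < w) :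
    Integrable (fun ω => X ω / Y ω) μ ∧
      ∫ ω, X ω / Y ω ∂μ ≤ ((∫ ω, X ω ^ 2 ∂μ) / w + w * ∫ ω, Y ω ^ (-2 : ℝ) ∂μ) / 2 := by
  have hle : ∀ ω, X ω / Y ω ≤ (X ω ^ 2 / w + w * Y ω ^ (-2 : ℝ)) / 2 := fun ω =>
    div_le_half_sq_div_add_mul_rpow (hY0 ω) hw
  have hsum : Integrable (fun ω => (X ω ^ 2 / w + w * Y ω ^ (-2 : ℝ)) / 2) μ :=
    ((hX2.div_const w).add (hY2.const_mul w)).div_const 2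
  have hint : Integrable (fun ω => X ω / Y ω) μ := hsum.mono' (hX.div₀ hY) (.of_forall fun ω => by
    rw [Real.norm_of_nonneg (div_nonneg (hX0 ω) (hY0 ω))]
    exact hle ω)
  refine ⟨hint, (integral_mono hint hsum hle).trans_eq ?_⟩
  rw [integral_div, integral_add (hX2.div_const w) (hY2.const_mul w), integral_div,
    integral_const_mul]

lemma integral_div_le_measureReal_add_integral_div [IsFiniteMeasure μ] (hX : Integrable X μ)
    (hY : Measurable Y) (hX0 : 0 ≤ X) (hXY : X ≤ Y) {t : ℝ} (ht : 0 < t) :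
    Integrable (fun ω => X ω / Y ω) μ ∧
      ∫ ω, X ω / Y ω ∂μ ≤ μ.real {ω | Y ω ≤ t} + (∫ ω, X ω ∂μ) / t := by
  have hmeas : MeasurableSet {ω | Y ω ≤ t} := measurableSet_le hY measurable_const
  set smallBall : Ω → ℝ := {ω | Y ω ≤ t}.indicator 1
  have hsmall : Integrable smallBall μ := (integrable_const 1).indicator hmeas
  have hY0 : 0 ≤ Y := hX0.trans hXY
  have hle : ∀ ω, X ω / Y ω ≤ smallBall ω + X ω / t := fun ω => by
    rcases le_or_gt (Y ω) t with hω | hω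
    · have hone : smallBall ω = 1 := Set.indicator_of_mem hω 1
      linarith [div_le_one_of_le₀ (hXY ω) (hY0 ω), div_nonneg (hX0 ω) ht.le]
    · have hzero : smallBall ω = 0 := Set.indicator_of_notMem hω.not_ge 1
      rw [hzero, zero_add]
      exact div_le_div_of_nonneg_left (hX0 ω) ht hω.le
  have hsum : Integrable (fun ω => smallBall ω + X ω / t) μ := hsmall.add (hX.div_const t)
  have hint : Integrable (fun ω => X ω / Y ω) μ :=
    hsum.mono' (hX.aestronglyMeasurable.div₀ hY.aestronglyMeasurable) (.of_forall fun ω => by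
      rw [Real.norm_of_nonneg (div_nonneg (hX0 ω) (hY0 ω))]
      exact hle ω)
  refine ⟨hint, (integral_mono hint hsum hle).trans_eq ?_⟩
  rw [integral_add hsmall (hX.div_const t), integral_div, integral_indicator_one hmeas]

lemma inv_mul_inv_le_integral_div [IsProbabilityMeasure μ] {C v : ℝ}
    (hX0 : ∀ᵐ ω ∂μ, 0 < X ω) (hY0 : ∀ᵐ ω ∂μ, 0 < Y ω) (hXY : Integrable (fun ω => X ω / Y ω) μ)
    (hYX : Integrable (fun ω => Y ω / X ω) μ) (hle : ∫ ω, X ω / Y ω ∂μ ≤ C * v) :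
    C⁻¹ * v⁻¹ ≤ ∫ ω, Y ω / X ω ∂μ := by
  have hpos : ∀ᵐ ω ∂μ, 0 < X ω / Y ω := by
    filter_upwards [hX0, hY0] with ω hx hy using div_pos hx hy
  calc C⁻¹ * v⁻¹ = (C * v)⁻¹ := (mul_inv C v).symm
    _ ≤ (∫ ω, X ω / Y ω ∂μ)⁻¹ := inv_anti₀ (integral_pos_of_ae_pos hXY hpos) hle
    _ = (∫ ω, X ω / Y ω ∂μ) ^ (-1 : ℝ) := (Real.rpow_neg_one _).symm
    _ ≤ ∫ ω, Y ω / X ω ∂μ :=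
        rpow_neg_integral_le_integral zero_le_one hXY hYX hpos
          (.of_forall fun ω => by rw [Real.rpow_neg_one, inv_div])

end ExpectedRatio

section ArithmeticGeometricMean

lemma rpow_neg_mean_rpow_le_prod {ι : Type*} [Fintype ι] [Nonempty ι] {z : ι → ℝ}
    (hz : ∀ i, 0 < z i) {p r : ℝ} (hp : 0 < p) (hr : 0 ≤ r) :
    ((Fintype.card ι : ℝ)⁻¹ * ∑ i, z i ^ p) ^ (-(r / p)) ≤
      ∏ i, z i ^ (-(r / Fintype.card ι)) := by
  have hcard : (0 : ℝ) < Fintype.card ι := by exact_mod_cast Fintype.card_pos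
  have amgm := Real.geom_mean_le_arith_mean_weighted Finset.univ
    (fun _ : ι => (Fintype.card ι : ℝ)⁻¹) (fun i => z i ^ p) (fun _ _ => by positivity)
    (by simp [hcard.ne']) (fun i _ => (Real.rpow_pos_of_pos (hz i) p).le)
  rw [← Finset.mul_sum] at amgm
  calc ((Fintype.card ι : ℝ)⁻¹ * ∑ i, z i ^ p) ^ (-(r / p))
      ≤ (∏ i, (z i ^ p) ^ (Fintype.card ι : ℝ)⁻¹) ^ (-(r / p)) :=
        Real.rpow_le_rpow_of_nonpos (Finset.prod_pos fun i _ => by have := hz i; positivity) amgm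
          (neg_nonpos.2 (by positivity))
    _ = ∏ i, z i ^ (-(r / Fintype.card ι)) := by
        rw [← Real.finsetProd_rpow _ _ fun i _ => by have := hz i; positivity]
        refine Finset.prod_congr rfl fun i _ => ?_
        rw [← Real.rpow_mul (hz i).le, ← Real.rpow_mul (hz i).le]
        congr 1
        field_simp

end ArithmeticGeometricMean

section Averaging

variable {Ω Ω' S : Type*} [MeasurableSpace Ω] [MeasurableSpace Ω'] [MeasurableSpace S]
  {μ : Measure Ω} {ν : Measure Ω'} {τ : Measure S} [IsProbabilityMeasure τ]
  [SFinite μ] [SFinite ν] {g : S → Ω → Ω'}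

lemma measurePreserving_uncurry_of_forall (hg : Measurable (Function.uncurry g))
    (h : ∀ s, MeasurePreserving (g s) μ ν) :
    MeasurePreserving (fun z : Ω × S => g z.2 z.1) (μ.prod τ) ν := by
  have skew : MeasurePreserving (fun z : S × Ω => (z.1, g z.1 z.2)) (τ.prod μ) (τ.prod ν) :=
    (MeasurePreserving.id τ).skew_product hg (Filter.Eventually.of_forall fun s => (h s).map_eq)
  exact (measurePreserving_snd.comp skew).comp Measure.measurePreserving_swap

variable {F : Ω' → ℝ}

lemma integrable_integral_comp_of_measurePreserving (hg : Measurable (Function.uncurry g))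
    (h : ∀ s, MeasurePreserving (g s) μ ν) (hF : Integrable F ν) :
    Integrable (fun ω => ∫ s, F (g s ω) ∂τ) μ :=
  ((measurePreserving_uncurry_of_forall hg h).integrable_comp_of_integrable hF).integral_prod_left

lemma integral_integral_comp_of_measurePreserving (hg : Measurable (Function.uncurry g))
    (h : ∀ s, MeasurePreserving (g s) μ ν) (hF : Integrable F ν) :
    ∫ ω, ∫ s, F (g s ω) ∂τ ∂μ = ∫ y, F y ∂ν := by
  have hmp := measurePreserving_uncurry_of_forall (τ := τ) hg h
  rw [integral_integral (f := fun ω s => F (g s ω)) (hmp.integrable_comp_of_integrable hF)]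
  rw [← hmp.map_eq, integral_map hmp.aemeasurable (hmp.map_eq ▸ hF.aestronglyMeasurable)]

lemma ae_integrable_comp_of_measurePreserving (hg : Measurable (Function.uncurry g))
    (h : ∀ s, MeasurePreserving (g s) μ ν) (hF : Integrable F ν) :
    ∀ᵐ ω ∂μ, Integrable (fun s => F (g s ω)) τ :=
  ((measurePreserving_uncurry_of_forall hg h).integrable_comp_of_integrable hF).prod_right_ae

lemma ae_ae_comp_of_measurePreserving (hg : Measurable (Function.uncurry g))
    (h : ∀ s, MeasurePreserving (g s) μ ν) {P : Ω' → Prop} (hP : ∀ᵐ y ∂ν, P y) :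
    ∀ᵐ ω ∂μ, ∀ᵐ s ∂τ, P (g s ω) :=
  Measure.ae_ae_of_ae_prod
    ((measurePreserving_uncurry_of_forall hg h).quasiMeasurePreserving.ae hP)

end Averaging

section Gaussian

variable {ι : Type*} [Fintype ι]

lemma integrable_abs_rpow_gaussianReal (v : NNReal) {s : ℝ} (hs : -1 < s) :
    Integrable (fun u : ℝ => |u| ^ s) (gaussianReal 0 v) := by
  rcases eq_or_ne v 0 with rfl | hv
  · rw [gaussianReal_zero_var]
    exact integrable_dirac (by simp)
  have : (0 : ℝ) < v := by positivity
  have hb : 0 < (2 * (v : ℝ))⁻¹ := by positivity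
  have lebesgue :
      Integrable fun u : ℝ => |u| ^ s * Real.exp (-(2 * (v : ℝ))⁻¹ * |u| ^ (2 : ℝ)) := by
    refine .of_integral_ne_zero (ne_of_gt ?_)
    rw [integral_comp_abs (f := fun u => u ^ s * Real.exp (-(2 * (v : ℝ))⁻¹ * u ^ (2 : ℝ))),
      integral_rpow_mul_exp_neg_mul_rpow two_pos hs hb]
    have := Real.Gamma_pos_of_pos (show 0 < (s + 1) / 2 by linarith)
    positivity
  rw [gaussianReal_of_var_ne_zero _ hv,
    integrable_withDensity_iff_integrable_smul₀' (by fun_prop) (by simp [gaussianPDF])]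
  refine (lebesgue.const_mul (√(2 * π * v))⁻¹).congr (Filter.Eventually.of_forall fun u => ?_)
  simp only [toReal_gaussianPDF, gaussianPDFReal, smul_eq_mul, sub_zero, Real.rpow_two, sq_abs]
  rw [neg_div, div_eq_inv_mul, neg_mul]
  ring

lemma ae_ne_gaussianReal (m : ℝ) {v : NNReal} (hv : v ≠ 0) (x : ℝ) :
    ∀ᵐ u ∂gaussianReal m v, u ≠ x := by
  have := nullSingletonClass_gaussianReal (μ := m) hv
  exact Measure.ae_ne _ x

lemma exp_neg_le_measureReal_gaussianReal_Ioi (t : ℝ) :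
    Real.exp (-2 - t ^ 2) ≤ (gaussianReal 0 1).real (Set.Ioi t) := by
  have density_ge : ∀ x ∈ Set.Icc t (t + 1), Real.exp (-2 - t ^ 2) ≤ gaussianPDFReal 0 1 x := by
    intro x hx
    have hconst : Real.exp (-1) ≤ (√(2 * π))⁻¹ := by
      rw [Real.exp_neg]
      refine inv_anti₀ (by positivity) (Real.sqrt_le_left (by positivity) |>.2 ?_)
      nlinarith [Real.exp_one_gt_d9, Real.pi_lt_d2]
    have hexp : -1 - t ^ 2 ≤ -x ^ 2 / 2 := by nlinarith [hx.1, hx.2, sq_nonneg (t - 1)]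
    calc Real.exp (-2 - t ^ 2) = Real.exp (-1) * Real.exp (-1 - t ^ 2) := by
          rw [← Real.exp_add]; ring_nf
      _ ≤ (√(2 * π))⁻¹ * Real.exp (-x ^ 2 / 2) := by gcongr
      _ = gaussianPDFReal 0 1 x := by simp [gaussianPDFReal]
  calc Real.exp (-2 - t ^ 2) = ∫ _ in t..(t + 1), Real.exp (-2 - t ^ 2) := by simp
    _ ≤ ∫ x in t..(t + 1), gaussianPDFReal 0 1 x :=
        intervalIntegral.integral_mono_on (by linarith) (by simp)
          (integrable_gaussianPDFReal 0 1).intervalIntegrable density_ge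
    _ = (gaussianReal 0 1).real (Set.Ioc t (t + 1)) := by
        rw [intervalIntegral.integral_of_le (by linarith), measureReal_def,
          gaussianReal_apply_eq_integral _ one_ne_zero,
          ENNReal.toReal_ofReal (integral_nonneg fun x => gaussianPDFReal_nonneg _ _ _)]
    _ ≤ (gaussianReal 0 1).real (Set.Ioi t) := measureReal_mono fun x hx => hx.1

lemma measureReal_pi_gaussianReal_Iic_le [Nonempty ι] (t : ℝ) :
    (Measure.pi fun _ : ι => gaussianReal 0 1).real (Set.Iic fun _ => t) ≤
      Real.exp (2 + t ^ 2) / Fintype.card ι := by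
  have : (0 : ℝ) < Fintype.card ι := by exact_mod_cast Fintype.card_pos
  set ε := Real.exp (-2 - t ^ 2) with hε
  have hone : (gaussianReal 0 1).real (Set.Iic t) ≤ Real.exp (-ε) := by
    have hcompl := probReal_compl_eq_one_sub (μ := gaussianReal 0 1) (measurableSet_Ioi (a := t))
    rw [Set.compl_Ioi] at hcompl
    linarith [exp_neg_le_measureReal_gaussianReal_Ioi t, Real.add_one_le_exp (-ε)]
  calc (Measure.pi fun _ : ι => gaussianReal 0 1).real (Set.Iic fun _ => t)
      = (gaussianReal 0 1).real (Set.Iic t) ^ Fintype.card ι := by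
        simp [measureReal_def, ← Set.pi_univ_Iic, Measure.pi_pi]
    _ ≤ Real.exp (-ε) ^ Fintype.card ι := by gcongr
    _ = (Real.exp (Fintype.card ι * ε))⁻¹ := by
        rw [← Real.exp_nat_mul, ← Real.exp_neg, mul_neg]
    _ ≤ (Fintype.card ι * ε)⁻¹ := by
        gcongr
        linarith [Real.add_one_le_exp (Fintype.card ι * ε)]
    _ = Real.exp (2 + t ^ 2) / Fintype.card ι := by
        rw [mul_inv, hε, ← Real.exp_neg, div_eq_inv_mul]
        ring_nf

variable [DecidableEq ι] {A : Matrix ι ι ℝ}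

lemma sum_mulVec_sq_of_mem_orthogonalGroup (hA : A ∈ Matrix.orthogonalGroup ι ℝ) (a : ι → ℝ) :
    ∑ i, (A *ᵥ a) i ^ 2 = ∑ i, a i ^ 2 := by
  have hdot : A *ᵥ a ⬝ᵥ A *ᵥ a = a ⬝ᵥ a := by
    rw [Matrix.dotProduct_mulVec, Matrix.vecMul_mulVec,
      (Matrix.mem_orthogonalGroup_iff' ι ℝ).1 hA, Matrix.vecMul_one]
  simpa [dotProduct, sq] using hdot

lemma measurePreserving_mulVec_of_mem_orthogonalGroup (hA : A ∈ Matrix.orthogonalGroup ι ℝ) :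
    MeasurePreserving (A *ᵥ ·) (Measure.pi fun _ => gaussianReal 0 1)
      (Measure.pi fun _ => gaussianReal 0 1) := by
  let isometry : EuclideanSpace ℝ ι →ₗᵢ[ℝ] EuclideanSpace ℝ ι :=
    { toLinearMap := Matrix.toEuclideanLin A
      norm_map' := fun x => by
        simpa [EuclideanSpace.norm_eq, Matrix.toLpLin_apply] using
          congrArg Real.sqrt (sum_mulVec_sq_of_mem_orthogonalGroup hA x.ofLp) }
  have toLp : MeasurePreserving (WithLp.toLp 2) (Measure.pi fun _ : ι => gaussianReal 0 1)
      (stdGaussian (EuclideanSpace ℝ ι)) := ⟨by fun_prop, map_pi_eq_stdGaussian⟩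
  have rotation : MeasurePreserving (isometry.toLinearIsometryEquiv rfl)
      (stdGaussian (EuclideanSpace ℝ ι)) (stdGaussian (EuclideanSpace ℝ ι)) :=
    ⟨by fun_prop, stdGaussian_map _⟩
  have ofLp : MeasurePreserving WithLp.ofLp (stdGaussian (EuclideanSpace ℝ ι))
      (Measure.pi fun _ : ι => gaussianReal 0 1) := toLp.symm (MeasurableEquiv.toLp 2 (ι → ℝ))
  exact ofLp.comp (rotation.comp toLp)

end Gaussian

section Torus

/-- The uniform probability measure on the circle `ℝ / 2πℤ`, realised on the fundamental domain
`(0, 2π]` so that the normalized norms become norms of functions on a probability space. -/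
noncomputable def torusMeasure : Measure ℝ := volume[|Set.Ioc 0 (2 * π)]

instance : IsProbabilityMeasure torusMeasure :=
  cond_isProbabilityMeasure_of_finite (by simp [Real.pi_pos]) measure_Ioc_lt_top.ne

lemma integral_torusMeasure (f : ℝ → ℝ) :
    ∫ x, f x ∂torusMeasure = (2 * π)⁻¹ * ∫ x in (0 : ℝ)..(2 * π), f x := by
  have hπ : 0 ≤ 2 * π := by positivity
  rw [torusMeasure, ProbabilityTheory.cond, integral_smul_measure,
    intervalIntegral.integral_of_le hπ]
  simp [ENNReal.toReal_ofReal, Real.pi_pos.le]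

lemma integral_torusMeasure_comp_add {f : ℝ → ℝ} (hf : Function.Periodic f (2 * π)) (c : ℝ) :
    ∫ x, f (x + c) ∂torusMeasure = ∫ x, f x ∂torusMeasure := by
  rw [integral_torusMeasure, integral_torusMeasure, intervalIntegral.integral_comp_add_right,
    zero_add, add_comm (2 * π), hf.intervalIntegral_add_eq c 0, zero_add]

lemma ae_torusMeasure_mem_Icc : ∀ᵐ x ∂torusMeasure, x ∈ Set.Icc 0 (2 * π) :=
  (ae_cond_mem measurableSet_Ioc).mono fun _ hx => Set.Ioc_subset_Icc_self hx

lemma zero_mem_Icc_two_pi : (0 : ℝ) ∈ Set.Icc 0 (2 * π) := ⟨le_rfl, by positivity⟩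

variable {f : ℝ → ℝ} {p q : ℝ}

lemma abs_le_supNorm (hf : Continuous f) {x : ℝ} (hx : x ∈ Set.Icc 0 (2 * π)) :
    |f x| ≤ supNorm f := by
  have hcpt : IsCompact (Set.range fun x : Set.Icc 0 (2 * π) => |f x|) :=
    isCompact_range (by fun_prop)
  exact le_ciSup hcpt.bddAbove ⟨x, hx⟩

lemma supNorm_nonneg (f : ℝ → ℝ) : 0 ≤ supNorm f :=
  Real.iSup_nonneg fun _ => abs_nonneg _

lemma exists_abs_eq_supNorm (hf : Continuous f) :
    ∃ x ∈ Set.Icc 0 (2 * π), |f x| = supNorm f := by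
  obtain ⟨x, hx, hmax⟩ := isCompact_Icc.exists_isMaxOn ⟨0, zero_mem_Icc_two_pi⟩
    (f := fun x => |f x|) (by fun_prop)
  have : Nonempty (Set.Icc 0 (2 * π)) := ⟨x, hx⟩
  exact ⟨x, hx, le_antisymm (abs_le_supNorm hf hx) (ciSup_le fun y => hmax y.2)⟩

lemma supNorm_div (f : ℝ → ℝ) {c : ℝ} (hc : 0 ≤ c) :
    supNorm (fun x => f x / c) = supNorm f / c := by
  simp_rw [supNorm, abs_div, abs_of_nonneg hc, div_eq_mul_inv]
  exact (Real.iSup_mul_of_nonneg (inv_nonneg.2 hc) _).symm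

lemma torusLpNorm_eq_integral (p : ℝ) (f : ℝ → ℝ) :
    torusLpNorm p f = (∫ x, |f x| ^ p ∂torusMeasure) ^ p⁻¹ := by
  rw [torusLpNorm, integral_torusMeasure, one_div]

lemma torusLpNorm_nonneg (p : ℝ) (f : ℝ → ℝ) : 0 ≤ torusLpNorm p f := by
  rw [torusLpNorm_eq_integral]
  positivity

lemma torusLpNorm_div (f : ℝ → ℝ) (hp : 0 < p) {c : ℝ} (hc : 0 ≤ c) :
    torusLpNorm p (fun x => f x / c) = torusLpNorm p f / c := by
  have hcp : 0 ≤ c ^ p := by positivity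
  simp only [torusLpNorm_eq_integral, abs_div, abs_of_nonneg hc, Real.div_rpow (abs_nonneg _) hc]
  rw [integral_div, Real.div_rpow (by positivity) hcp, Real.rpow_rpow_inv hc hp.ne']

lemma memLp_torusMeasure (hf : Continuous f) (r : ENNReal) : MemLp f r torusMeasure :=
  .of_bound hf.aestronglyMeasurable (supNorm f)
    (ae_torusMeasure_mem_Icc.mono fun _ hx => abs_le_supNorm hf hx)

lemma integrable_torusMeasure (hf : Continuous f) : Integrable f torusMeasure :=
  memLp_one_iff_integrable.1 (memLp_torusMeasure hf 1)

lemma torusLpNorm_eq_toReal_eLpNorm (hf : Continuous f) (hp : 0 < p) :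
    torusLpNorm p f = (eLpNorm f (ENNReal.ofReal p) torusMeasure).toReal := by
  rw [torusLpNorm_eq_integral, (memLp_torusMeasure hf _).eLpNorm_eq_integral_rpow_norm
    (by simpa) ENNReal.ofReal_ne_top, ENNReal.toReal_ofReal hp.le,
    ENNReal.toReal_ofReal (by positivity)]
  simp only [Real.norm_eq_abs]

lemma torusLpNorm_mono (hf : Continuous f) (hp : 0 < p) (hpq : p ≤ q) :
    torusLpNorm p f ≤ torusLpNorm q f := by
  rw [torusLpNorm_eq_toReal_eLpNorm hf hp, torusLpNorm_eq_toReal_eLpNorm hf (hp.trans_le hpq)]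
  exact ENNReal.toReal_mono (memLp_torusMeasure hf _).eLpNorm_ne_top
    (eLpNorm_le_eLpNorm_of_exponent_le (ENNReal.ofReal_le_ofReal hpq) hf.aestronglyMeasurable)

lemma torusLpNorm_le_supNorm (hf : Continuous f) (hp : 0 < p) :
    torusLpNorm p f ≤ supNorm f := by
  rw [torusLpNorm_eq_toReal_eLpNorm hf hp]
  refine ENNReal.toReal_le_of_le_ofReal (supNorm_nonneg f) ?_
  simpa using eLpNorm_le_of_ae_bound (p := ENNReal.ofReal p)
    (ae_torusMeasure_mem_Icc.mono fun _ hx => abs_le_supNorm hf hx)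

lemma torusLpNorm_pos (hf : Continuous f) (hp : 0 < p) {x : ℝ} (hx : x ∈ Set.Icc 0 (2 * π))
    (hfx : f x ≠ 0) : 0 < torusLpNorm p f := by
  have hcont : Continuous fun x => |f x| ^ p := hf.abs.rpow_const fun _ => Or.inr hp.le
  have hint := intervalIntegral.integral_pos (by positivity) hcont.continuousOn
    (fun x _ => by positivity) ⟨x, hx, by positivity⟩
  rw [torusLpNorm]
  positivity

lemma torusLpNorm_le_one_add_integral (f : ℝ → ℝ) (hq : 1 ≤ q) :
    torusLpNorm q f ≤ 1 + ∫ x, |f x| ^ q ∂torusMeasure := by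
  set I := ∫ x, |f x| ^ q ∂torusMeasure with hI_def
  have hI : 0 ≤ I := by positivity
  have hq0 : 0 ≤ q⁻¹ := by positivity
  rw [torusLpNorm_eq_integral, ← hI_def]
  calc I ^ q⁻¹ ≤ (1 + I) ^ q⁻¹ := Real.rpow_le_rpow hI (by linarith) hq0
    _ ≤ 1 + I := Real.rpow_le_self_of_one_le (by linarith) (inv_le_one_of_one_le₀ hq)

variable {X : Type*} [TopologicalSpace X] {F : X → ℝ → ℝ}

lemma continuous_supNorm (hF : Continuous (Function.uncurry F)) :
    Continuous fun a => supNorm (F a) := by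
  have hsup := isCompact_Icc.continuous_sSup (K := Set.Icc 0 (2 * π)) (f := fun a x => |F a x|)
    (by fun_prop)
  simpa only [supNorm, sSup_image'] using hsup

lemma continuous_torusLpNorm (hF : Continuous (Function.uncurry F)) (hp : 0 < p) :
    Continuous fun a => torusLpNorm p (F a) := by
  have hpow : Continuous (Function.uncurry fun a x => |F a x| ^ p) :=
    hF.abs.rpow_const fun _ => Or.inr hp.le
  have hint := intervalIntegral.continuous_parametric_intervalIntegral_of_continuous'
    (μ := volume) hpow 0 (2 * π)
  exact (hint.const_mul _).rpow_const fun _ => Or.inr (by positivity)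

end Torus

section Localization

lemma measureReal_torusMeasure_Ioc {a b : ℝ} (ha : 0 ≤ a) (hab : a ≤ b) (hb : b ≤ 2 * π) :
    torusMeasure.real (Set.Ioc a b) = (b - a) / (2 * π) := by
  have hsubset : Set.Ioc a b ⊆ Set.Ioc 0 (2 * π) := Set.Ioc_subset_Ioc ha hb
  rw [torusMeasure, measureReal_def, cond_apply measurableSet_Ioc, ENNReal.toReal_mul,
    ENNReal.toReal_inv, ← measureReal_def, ← measureReal_def, Set.inter_eq_right.2 hsubset,
    Real.volume_real_Ioc_of_le (by positivity), Real.volume_real_Ioc_of_le hab, sub_zero,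
    inv_mul_eq_div]

lemma exists_Icc_subset_Icc_of_mem {a b x h : ℝ} (hx : x ∈ Set.Icc a b) (hh : 0 ≤ h)
    (hab : h ≤ b - a) :
    ∃ c, a ≤ c ∧ c + h ≤ b ∧ ∀ y ∈ Set.Icc c (c + h), |x - y| ≤ h := by
  obtain ⟨hax, hxb⟩ := hx
  refine ⟨max (x - h) a, le_max_right _ _, ?_, fun y hy => abs_le.2 ?_⟩
  · rcases max_cases (x - h) a with ⟨hmax, _⟩ | ⟨hmax, _⟩ <;> linarith
  · rcases max_cases (x - h) a with ⟨hmax, _⟩ | ⟨hmax, _⟩ <;>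
      constructor <;> linarith [hy.1, hy.2]

variable {f : ℝ → ℝ} {K : ℝ}

lemma inv_le_measureReal_half_supNorm_le_abs (hf : Continuous f) (hK : 0 < K)
    (hKπ : (2 * K)⁻¹ ≤ 2 * π) (hlip : ∀ x y, |f x - f y| ≤ K * supNorm f * |x - y|) :
    (4 * π * K)⁻¹ ≤ torusMeasure.real {x | supNorm f / 2 ≤ |f x|} := by
  obtain ⟨x₀, hx₀, hmax⟩ := exists_abs_eq_supNorm hf
  obtain ⟨c, hc, hcb, hnear⟩ :=
    exists_Icc_subset_Icc_of_mem hx₀ (h := (2 * K)⁻¹) (by positivity) (by simpa using hKπ)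
  have hlarge : Set.Ioc c (c + (2 * K)⁻¹) ⊆ {x | supNorm f / 2 ≤ |f x|} := by
    intro x hx
    have hdist := hnear x (Set.Ioc_subset_Icc_self hx)
    have hclose : |f x₀ - f x| ≤ supNorm f / 2 :=
      calc |f x₀ - f x| ≤ K * supNorm f * |x₀ - x| := hlip x₀ x
        _ ≤ K * supNorm f * (2 * K)⁻¹ := by
            have := supNorm_nonneg f
            gcongr
        _ = supNorm f / 2 := by field_simp
    have := abs_sub_abs_le_abs_sub (f x₀) (f x)
    rw [Set.mem_ofPred_eq]
    linarith
  calc (4 * π * K)⁻¹ = torusMeasure.real (Set.Ioc c (c + (2 * K)⁻¹)) := by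
        rw [measureReal_torusMeasure_Ioc hc (by linarith [inv_pos.2 (mul_pos two_pos hK)]) hcb]
        field_simp
        ring
    _ ≤ _ := measureReal_mono hlarge

lemma sq_supNorm_le_log_add_integral_exp_sq (hf : Continuous f) (hK : 0 < K)
    (hKπ : (2 * K)⁻¹ ≤ 2 * π) (hlip : ∀ x y, |f x - f y| ≤ K * supNorm f * |x - y|)
    {c : ℝ} (hc : 0 < c) :
    supNorm f ^ 2 ≤ 4 / c * (Real.log (4 * π * K) + ∫ x, Real.exp (c * f x ^ 2) ∂torusMeasure) := by
  set I := ∫ x, Real.exp (c * f x ^ 2) ∂torusMeasure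
  have hint : Integrable (fun x => Real.exp (c * f x ^ 2)) torusMeasure :=
    integrable_torusMeasure (by fun_prop)
  have hsubset : {x | supNorm f / 2 ≤ |f x|} ⊆
      {x | Real.exp (c * (supNorm f / 2) ^ 2) ≤ Real.exp (c * f x ^ 2)} := by
    intro x hx
    rw [Set.mem_ofPred_eq, ← sq_abs (f x)]
    have := supNorm_nonneg f
    gcongr
    exact hx
  have markov : Real.exp (c * (supNorm f / 2) ^ 2) * (4 * π * K)⁻¹ ≤ I :=
    calc Real.exp (c * (supNorm f / 2) ^ 2) * (4 * π * K)⁻¹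
        ≤ Real.exp (c * (supNorm f / 2) ^ 2) *
            torusMeasure.real
              {x | Real.exp (c * (supNorm f / 2) ^ 2) ≤ Real.exp (c * f x ^ 2)} := by
          gcongr
          exact (inv_le_measureReal_half_supNorm_le_abs hf hK hKπ hlip).trans
            (measureReal_mono hsubset)
      _ ≤ I := mul_meas_ge_le_integral_of_nonneg
          (Filter.Eventually.of_forall fun x => (Real.exp_pos _).le) hint _
  have hI0 : 0 < I := lt_of_lt_of_le (by positivity) markov
  have hlog : c * (supNorm f / 2) ^ 2 ≤ Real.log (4 * π * K) + I :=
    calc c * (supNorm f / 2) ^ 2 = Real.log (Real.exp (c * (supNorm f / 2) ^ 2)) :=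
          (Real.log_exp _).symm
      _ ≤ Real.log (4 * π * K * I) := by
          refine Real.log_le_log (Real.exp_pos _) ?_
          rwa [← div_eq_mul_inv, div_le_iff₀' (by positivity)] at markov
      _ = Real.log (4 * π * K) + Real.log I := Real.log_mul (by positivity) hI0.ne'
      _ ≤ Real.log (4 * π * K) + I := by linarith [Real.log_le_sub_one_of_pos hI0]
  calc supNorm f ^ 2 = 4 / c * (c * (supNorm f / 2) ^ 2) := by field_simp; ring
    _ ≤ _ := by gcongr

end Localization

section TrigonometricSystem

/-- The orthonormal trigonometric system `1, √2 cos x, √2 sin x, √2 cos 2x, √2 sin 2x, …`,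
enumerated from `0` in the order in which `trigPoly` numbers its coefficients. -/
noncomputable def trigBasis (i : ℕ) (x : ℝ) : ℝ :=
  if i = 0 then 1
  else if Odd i then √2 * Real.cos (((i + 1) / 2 : ℕ) * x)
  else √2 * Real.sin (((i + 1) / 2 : ℕ) * x)

@[simp]
lemma trigBasis_zero (x : ℝ) : trigBasis 0 x = 1 := if_pos rfl

lemma trigBasis_two_mul_add_one (k : ℕ) (x : ℝ) :
    trigBasis (2 * k + 1) x = √2 * Real.cos ((k + 1) * x) := by
  have hk : (2 * k + 1 + 1) / 2 = k + 1 := by omega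
  simp [trigBasis, hk]

lemma trigBasis_two_mul_add_two (k : ℕ) (x : ℝ) :
    trigBasis (2 * k + 2) x = √2 * Real.sin ((k + 1) * x) := by
  have hk : (2 * k + 2 + 1) / 2 = k + 1 := by omega
  have hodd : ¬ Odd (2 * k + 2) := by simp [parity_simps]
  simp [trigBasis, hk, hodd]

lemma trigBasis_periodic (i : ℕ) : Function.Periodic (trigBasis i) (2 * π) := by
  intro x
  simp only [trigBasis, mul_add, Real.cos_add_nat_mul_two_pi, Real.sin_add_nat_mul_two_pi]

lemma abs_trigBasis_sub_le (i : ℕ) (x y : ℝ) :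
    |trigBasis i x - trigBasis i y| ≤ √2 * (((i + 1) / 2 : ℕ) * |x - y|) := by
  have hfreq : |((i + 1) / 2 : ℕ) * x - ((i + 1) / 2 : ℕ) * y| = ((i + 1) / 2 : ℕ) * |x - y| := by
    rw [← mul_sub, abs_mul, Nat.abs_cast]
  unfold trigBasis
  split_ifs
  · rw [sub_self, abs_zero]
    positivity
  · rw [← mul_sub, abs_mul, abs_of_nonneg (Real.sqrt_nonneg 2), ← hfreq]
    exact mul_le_mul_of_nonneg_left (Real.abs_cos_sub_cos_le _ _) (Real.sqrt_nonneg 2)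
  · rw [← mul_sub, abs_mul, abs_of_nonneg (Real.sqrt_nonneg 2), ← hfreq]
    exact mul_le_mul_of_nonneg_left (Real.abs_sin_sub_sin_le _ _) (Real.sqrt_nonneg 2)

lemma trigBasis_mul_add_trigBasis_mul (k : ℕ) (x y : ℝ) :
    trigBasis (2 * k + 1) x * trigBasis (2 * k + 1) y +
        trigBasis (2 * k + 2) x * trigBasis (2 * k + 2) y =
      2 * Real.cos ((k + 1) * (x - y)) := by
  simp only [trigBasis_two_mul_add_one, trigBasis_two_mul_add_two, mul_sub, Real.cos_sub]
  linear_combination (Real.cos ((k + 1) * x) * Real.cos ((k + 1) * y) +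
    Real.sin ((k + 1) * x) * Real.sin ((k + 1) * y)) * Real.mul_self_sqrt (zero_le_two (α := ℝ))

lemma sum_trigBasis_mul_self (n : ℕ) (x : ℝ) :
    ∑ i ∈ Finset.range (2 * n + 1), trigBasis i x * trigBasis i x = 2 * n + 1 := by
  induction n with
  | zero => simp
  | succ n ih =>
    rw [mul_add_one, Finset.sum_range_succ, Finset.sum_range_succ, ih, add_assoc,
      trigBasis_mul_add_trigBasis_mul]
    simp
    ring

lemma sin_half_mul_sum_trigBasis_mul (n : ℕ) (x y : ℝ) :
    Real.sin ((x - y) / 2) *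
        ∑ i ∈ Finset.range (2 * n + 1), trigBasis i x * trigBasis i y =
      Real.sin ((2 * n + 1) * ((x - y) / 2)) := by
  induction n with
  | zero => simp
  | succ n ih =>
    rw [mul_add_one, Finset.sum_range_succ, Finset.sum_range_succ, add_assoc,
      trigBasis_mul_add_trigBasis_mul, mul_add, ih]
    have hlower : (2 * n + 1) * ((x - y) / 2) = (n + 1) * (x - y) - (x - y) / 2 := by ring
    have hupper : (2 * ((n + 1 : ℕ) : ℝ) + 1) * ((x - y) / 2) =
        (n + 1) * (x - y) + (x - y) / 2 := by
      push_cast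
      ring
    rw [hlower, hupper, Real.sin_sub, Real.sin_add]
    ring

/-- The `j`-th of the `2n + 1` equally spaced points of the circle starting at `s`. -/
noncomputable def node (n : ℕ) (s : ℝ) (j : Fin (2 * n + 1)) : ℝ :=
  s + 2 * π * j / (2 * n + 1)

lemma node_zero_right (n : ℕ) (s : ℝ) : node n s 0 = s := by simp [node]

lemma continuous_node (n : ℕ) (j : Fin (2 * n + 1)) : Continuous fun s => node n s j := by
  unfold node
  fun_prop

lemma node_zero_mem_Icc (n : ℕ) (j : Fin (2 * n + 1)) : node n 0 j ∈ Set.Icc 0 (2 * π) := by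
  have hj : (j : ℝ) ≤ 2 * n + 1 := by exact_mod_cast j.2.le
  refine ⟨by unfold node; positivity, ?_⟩
  rw [node, zero_add, div_le_iff₀ (by positivity)]
  gcongr

lemma sum_trigBasis_node_mul_of_ne {n : ℕ} (s : ℝ) {j l : Fin (2 * n + 1)} (hjl : j ≠ l) :
    ∑ i ∈ Finset.range (2 * n + 1), trigBasis i (node n s j) * trigBasis i (node n s l) = 0 := by
  have hhalf : (node n s j - node n s l) / 2 = π * ((j : ℝ) - l) / (2 * n + 1) := by
    rw [node, node]
    ring
  have hnum : Real.sin ((2 * n + 1) * ((node n s j - node n s l) / 2)) = 0 := by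
    rw [hhalf, mul_div_cancel₀ _ (by positivity), mul_comm]
    exact_mod_cast Real.sin_int_mul_pi ((j : ℤ) - l)
  have hden : Real.sin ((node n s j - node n s l) / 2) ≠ 0 := by
    have hj : (j : ℝ) < 2 * n + 1 := by exact_mod_cast j.2
    have hl : (l : ℝ) < 2 * n + 1 := by exact_mod_cast l.2
    have hsub : (j : ℝ) - l ≠ 0 := sub_ne_zero.2 (by simpa [Fin.val_inj] using hjl)
    have : (0 : ℝ) ≤ j := by positivity
    have : (0 : ℝ) ≤ l := by positivity
    rw [hhalf, Ne, Real.sin_eq_zero_iff_of_lt_of_lt]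
    · have := Real.pi_pos.ne'
      positivity
    · rw [lt_div_iff₀ (by positivity)]
      nlinarith [Real.pi_pos]
    · rw [div_lt_iff₀ (by positivity)]
      nlinarith [Real.pi_pos]
  refine (mul_eq_zero.1 ?_).resolve_left hden
  rw [sin_half_mul_sum_trigBasis_mul, hnum]

end TrigonometricSystem

section RandomPolynomial

variable {n : ℕ}

lemma sum_univ_fin_two_mul_add_one {M : Type*} [AddCommMonoid M] (n : ℕ)
    (f : Fin (2 * n + 1) → M) :
    ∑ i, f i = f ⟨0, by omega⟩ +
      ∑ k : Fin n, (f ⟨2 * k.1 + 1, by omega⟩ + f ⟨2 * k.1 + 2, by omega⟩) := by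
  induction n with
  | zero => simp
  | succ n ih =>
    have hlast := Fin.sum_univ_castSucc (n := 2 * n + 2) f
    have hprev := Fin.sum_univ_castSucc (n := 2 * n + 1) fun i => f i.castSucc
    rw [Fin.sum_univ_castSucc (n := n), ← add_assoc]
    exact hlast.trans (by rw [hprev, ih fun i => f i.castSucc.castSucc, add_assoc]; rfl)

lemma trigPoly_eq_sum (a : Fin (2 * n + 1) → ℝ) (x : ℝ) :
    trigPoly n a x = ∑ i, a i * trigBasis i x := by
  rw [sum_univ_fin_two_mul_add_one, trigPoly]
  simp only [trigBasis_zero, trigBasis_two_mul_add_one, trigBasis_two_mul_add_two, mul_one,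
    mul_assoc]

/-- The matrix evaluating `T_a / √N`, `N = 2n + 1`, at the points `node n s j`. -/
noncomputable def samplingMatrix (n : ℕ) (s : ℝ) :
    Matrix (Fin (2 * n + 1)) (Fin (2 * n + 1)) ℝ :=
  Matrix.of fun j i => trigBasis i (node n s j) / √(2 * n + 1)

lemma samplingMatrix_mem_orthogonalGroup (n : ℕ) (s : ℝ) :
    samplingMatrix n s ∈ Matrix.orthogonalGroup (Fin (2 * n + 1)) ℝ := by
  rw [Matrix.mem_orthogonalGroup_iff]
  ext j l
  have hentry : (samplingMatrix n s * (samplingMatrix n s)ᵀ) j l =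
      (∑ i ∈ Finset.range (2 * n + 1), trigBasis i (node n s j) * trigBasis i (node n s l)) /
        (2 * n + 1) := by
    rw [Finset.sum_range, Finset.sum_div, Matrix.mul_apply]
    refine Finset.sum_congr rfl fun i _ => ?_
    simp only [samplingMatrix, Matrix.transpose_apply, Matrix.of_apply]
    rw [div_mul_div_comm, Real.mul_self_sqrt (by positivity)]
  rw [hentry, Matrix.one_apply]
  split_ifs with hjl
  · rw [hjl, sum_trigBasis_mul_self, div_self (by positivity)]
  · rw [sum_trigBasis_node_mul_of_ne s hjl, zero_div]

/-- The polynomial `T_a / √N`, `N = 2n + 1`, whose values have variance `1` for standard Gaussian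
coefficients `a`. The ratios of norms are unchanged by this normalization. -/
noncomputable def normalizedTrigPoly (n : ℕ) (a : Fin (2 * n + 1) → ℝ) (x : ℝ) : ℝ :=
  trigPoly n a x / √(2 * n + 1)

lemma samplingMatrix_mulVec (s : ℝ) (a : Fin (2 * n + 1) → ℝ) :
    samplingMatrix n s *ᵥ a = fun j => normalizedTrigPoly n a (node n s j) := by
  ext j
  simp only [normalizedTrigPoly, trigPoly_eq_sum, Finset.sum_div, Matrix.mulVec, dotProduct,
    samplingMatrix, Matrix.of_apply]
  exact Finset.sum_congr rfl fun i _ => by rw [mul_comm, mul_div]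

lemma continuous_uncurry_normalizedTrigPoly (n : ℕ) :
    Continuous (Function.uncurry (normalizedTrigPoly n)) := by
  unfold Function.uncurry normalizedTrigPoly trigPoly
  fun_prop

lemma continuous_normalizedTrigPoly (a : Fin (2 * n + 1) → ℝ) :
    Continuous (normalizedTrigPoly n a) :=
  (continuous_uncurry_normalizedTrigPoly n).uncurry_left a

lemma normalizedTrigPoly_periodic (a : Fin (2 * n + 1) → ℝ) :
    Function.Periodic (normalizedTrigPoly n a) (2 * π) := fun x => by
  simp only [normalizedTrigPoly, trigPoly_eq_sum, trigBasis_periodic _ x]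

lemma abs_coeff_le_mul_supNorm (a : Fin (2 * n + 1) → ℝ) (i : Fin (2 * n + 1)) :
    |a i| ≤ √(2 * n + 1) * supNorm (normalizedTrigPoly n a) := by
  have hM := supNorm_nonneg (normalizedTrigPoly n a)
  refine abs_le_of_sq_le_sq ?_ (by positivity)
  calc a i ^ 2 ≤ ∑ i, a i ^ 2 :=
        Finset.single_le_sum (f := fun i => a i ^ 2) (fun _ _ => sq_nonneg _) (Finset.mem_univ i)
    _ = ∑ j, normalizedTrigPoly n a (node n 0 j) ^ 2 := by
        rw [← sum_mulVec_sq_of_mem_orthogonalGroup (samplingMatrix_mem_orthogonalGroup n 0),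
          samplingMatrix_mulVec]
    _ ≤ ∑ _ : Fin (2 * n + 1), supNorm (normalizedTrigPoly n a) ^ 2 := by
        refine Finset.sum_le_sum fun j _ => sq_le_sq' ?_ ?_ <;>
          linarith [abs_le.1 (abs_le_supNorm (continuous_normalizedTrigPoly a)
            (node_zero_mem_Icc n j))]
    _ = (√(2 * n + 1) * supNorm (normalizedTrigPoly n a)) ^ 2 := by
        rw [mul_pow, Real.sq_sqrt (by positivity)]
        simp

lemma abs_normalizedTrigPoly_sub_le (a : Fin (2 * n + 1) → ℝ) (x y : ℝ) :
    |normalizedTrigPoly n a x - normalizedTrigPoly n a y| ≤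
      (2 * n + 1) ^ 2 * supNorm (normalizedTrigPoly n a) * |x - y| := by
  set M := supNorm (normalizedTrigPoly n a)
  have hM : 0 ≤ M := supNorm_nonneg _
  have hterm : ∀ i : Fin (2 * n + 1), |a i * (trigBasis i x - trigBasis i y)| ≤
      √(2 * n + 1) * M * ((2 * n + 1) * |x - y|) := by
    intro i
    have hfreq : (((i + 1) / 2 : ℕ) : ℝ) ≤ n := by exact_mod_cast (by omega : (i.1 + 1) / 2 ≤ n)
    have hsqrt : √2 ≤ 2 := (Real.sqrt_le_left two_pos.le).2 (by norm_num)
    rw [abs_mul]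
    gcongr
    · exact abs_coeff_le_mul_supNorm a i
    · calc |trigBasis i x - trigBasis i y| ≤ √2 * (((i + 1) / 2 : ℕ) * |x - y|) :=
            abs_trigBasis_sub_le _ _ _
        _ ≤ 2 * (n * |x - y|) := by gcongr
        _ ≤ (2 * n + 1) * |x - y| := by linarith [abs_nonneg (x - y)]
  rw [normalizedTrigPoly, normalizedTrigPoly, ← sub_div, abs_div,
    abs_of_nonneg (Real.sqrt_nonneg _), div_le_iff₀ (by positivity), trigPoly_eq_sum,
    trigPoly_eq_sum, ← Finset.sum_sub_distrib]
  calc |∑ i : Fin (2 * n + 1), (a i * trigBasis i x - a i * trigBasis i y)|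
      ≤ ∑ i : Fin (2 * n + 1), √(2 * n + 1) * M * ((2 * n + 1) * |x - y|) := by
        refine (Finset.abs_sum_le_sum_abs _ _).trans (Finset.sum_le_sum fun i _ => ?_)
        rw [← mul_sub]
        exact hterm i
    _ = (2 * n + 1) ^ 2 * M * |x - y| * √(2 * n + 1) := by
        simp
        ring

/-- The law of the coefficients `a ~ N(0, I_N)`, `N = 2n + 1`. -/
noncomputable abbrev coeffMeasure (n : ℕ) : Measure (Fin (2 * n + 1) → ℝ) :=
  Measure.pi fun _ => gaussianReal 0 1

lemma measurePreserving_normalizedTrigPoly_node (n : ℕ) (s : ℝ) :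
    MeasurePreserving (fun a j => normalizedTrigPoly n a (node n s j))
      (coeffMeasure n) (coeffMeasure n) := by
  simpa only [samplingMatrix_mulVec] using
    measurePreserving_mulVec_of_mem_orthogonalGroup (samplingMatrix_mem_orthogonalGroup n s)

lemma measurable_uncurry_normalizedTrigPoly_node (n : ℕ) :
    Measurable (Function.uncurry fun s a j => normalizedTrigPoly n a (node n s j)) := by
  refine measurable_pi_lambda _ fun j => Continuous.measurable ?_
  exact (continuous_uncurry_normalizedTrigPoly n).comp₂ continuous_snd
    ((continuous_node n j).comp continuous_fst)

lemma measurePreserving_normalizedTrigPoly (n : ℕ) (x : ℝ) :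
    MeasurePreserving (fun a => normalizedTrigPoly n a x) (coeffMeasure n) (gaussianReal 0 1) := by
  have hnode := (measurePreserving_eval (fun _ => gaussianReal 0 1) 0).comp
    (measurePreserving_normalizedTrigPoly_node n x)
  simpa [Function.comp_def, node_zero_right] using hnode

lemma measurable_uncurry_normalizedTrigPoly_swap (n : ℕ) :
    Measurable (Function.uncurry fun x a => normalizedTrigPoly n a x) :=
  ((continuous_uncurry_normalizedTrigPoly n).comp continuous_swap).measurable

lemma ae_normalizedTrigPoly_zero_ne_zero (n : ℕ) :
    ∀ᵐ a ∂coeffMeasure n, normalizedTrigPoly n a 0 ≠ 0 :=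
  (measurePreserving_normalizedTrigPoly n 0).quasiMeasurePreserving.ae
    (ae_ne_gaussianReal 0 one_ne_zero 0)

end RandomPolynomial

section Moments

variable {n : ℕ} {p : ℝ}

lemma one_le_log_two_mul_add_one (hn : 1 ≤ n) : 1 ≤ Real.log (2 * n + 1) := by
  have hn' : (1 : ℝ) ≤ n := by exact_mod_cast hn
  rw [Real.le_log_iff_exp_le (by positivity)]
  linarith [Real.exp_one_lt_three]

lemma log_four_mul_pi_mul_sq_le (hn : 1 ≤ n) :
    Real.log (4 * π * (2 * n + 1) ^ 2) ≤ 5 * Real.log (2 * n + 1) := by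
  have hn' : (1 : ℝ) ≤ n := by exact_mod_cast hn
  have hcube : 4 * π ≤ (2 * n + 1) ^ 3 :=
    calc 4 * π ≤ 3 ^ 3 := by linarith [Real.pi_le_four]
      _ ≤ (2 * n + 1) ^ 3 := by gcongr; linarith
  calc Real.log (4 * π * (2 * n + 1) ^ 2) ≤ Real.log ((2 * n + 1) ^ 3 * (2 * n + 1) ^ 2) := by
        gcongr
    _ = 5 * Real.log (2 * n + 1) := by
        rw [← pow_add, Real.log_pow]
        norm_num

lemma integrable_integral_comp_normalizedTrigPoly {φ : ℝ → ℝ}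
    (hφ : Integrable φ (gaussianReal 0 1)) :
    Integrable (fun a => ∫ x, φ (normalizedTrigPoly n a x) ∂torusMeasure) (coeffMeasure n) :=
  integrable_integral_comp_of_measurePreserving (measurable_uncurry_normalizedTrigPoly_swap n)
    (measurePreserving_normalizedTrigPoly n) hφ

lemma integral_integral_comp_normalizedTrigPoly {φ : ℝ → ℝ}
    (hφ : Integrable φ (gaussianReal 0 1)) :
    ∫ a, ∫ x, φ (normalizedTrigPoly n a x) ∂torusMeasure ∂coeffMeasure n =
      ∫ u, φ u ∂gaussianReal 0 1 :=
  integral_integral_comp_of_measurePreserving (measurable_uncurry_normalizedTrigPoly_swap n)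
    (measurePreserving_normalizedTrigPoly n) hφ

lemma sq_supNorm_normalizedTrigPoly_le (hn : 1 ≤ n) {c : ℝ} (hc : 0 < c)
    (a : Fin (2 * n + 1) → ℝ) :
    supNorm (normalizedTrigPoly n a) ^ 2 ≤ 4 / c * (5 * Real.log (2 * n + 1) +
      ∫ x, Real.exp (c * normalizedTrigPoly n a x ^ 2) ∂torusMeasure) := by
  have hKπ : (2 * (2 * n + 1 : ℝ) ^ 2)⁻¹ ≤ 2 * π :=
    calc (2 * (2 * n + 1 : ℝ) ^ 2)⁻¹ ≤ 1 :=
          inv_le_one_of_one_le₀ (by nlinarith [n.cast_nonneg (α := ℝ)])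
      _ ≤ 2 * π := by linarith [Real.pi_gt_three]
  refine (sq_supNorm_le_log_add_integral_exp_sq (continuous_normalizedTrigPoly a) (by positivity)
    hKπ (abs_normalizedTrigPoly_sub_le a) hc).trans ?_
  gcongr
  exact log_four_mul_pi_mul_sq_le hn

lemma exists_integral_sq_supNorm_normalizedTrigPoly_le : ∃ C, 0 < C ∧ ∀ n : ℕ, 1 ≤ n →
    Integrable (fun a => supNorm (normalizedTrigPoly n a) ^ 2) (coeffMeasure n) ∧
      ∫ a, supNorm (normalizedTrigPoly n a) ^ 2 ∂coeffMeasure n ≤ C * Real.log (2 * n + 1) := by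
  obtain ⟨c, hc, hexp⟩ := IsGaussian.exists_integrable_exp_sq (gaussianReal 0 1)
  simp only [Real.norm_eq_abs, sq_abs] at hexp
  set G := ∫ u, Real.exp (c * u ^ 2) ∂gaussianReal 0 1
  have hG0 : 0 ≤ G := integral_nonneg fun u => (Real.exp_pos _).le
  refine ⟨4 / c * (5 + G), by positivity, fun n hn => ?_⟩
  have hlog := one_le_log_two_mul_add_one hn
  have hsum : Integrable (fun a => 4 / c * (5 * Real.log (2 * n + 1) +
      ∫ x, Real.exp (c * normalizedTrigPoly n a x ^ 2) ∂torusMeasure)) (coeffMeasure n) :=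
    ((integrable_const _).add (integrable_integral_comp_normalizedTrigPoly hexp)).const_mul _
  have hint : Integrable (fun a => supNorm (normalizedTrigPoly n a) ^ 2) (coeffMeasure n) :=
    hsum.mono' ((continuous_supNorm (continuous_uncurry_normalizedTrigPoly n)).pow
      2).aestronglyMeasurable (.of_forall fun a => by
        rw [Real.norm_of_nonneg (sq_nonneg _)]
        exact sq_supNorm_normalizedTrigPoly_le hn hc a)
  refine ⟨hint, ?_⟩
  calc ∫ a, supNorm (normalizedTrigPoly n a) ^ 2 ∂coeffMeasure n
      ≤ ∫ a, 4 / c * (5 * Real.log (2 * n + 1) +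
          ∫ x, Real.exp (c * normalizedTrigPoly n a x ^ 2) ∂torusMeasure) ∂coeffMeasure n :=
        integral_mono hint hsum (sq_supNorm_normalizedTrigPoly_le hn hc)
    _ = 4 / c * (5 * Real.log (2 * n + 1) + G) := by
        rw [integral_const_mul, integral_add (integrable_const _)
          (integrable_integral_comp_normalizedTrigPoly hexp),
          integral_integral_comp_normalizedTrigPoly hexp, integral_const, probReal_univ, one_smul]
    _ ≤ 4 / c * (5 + G) * Real.log (2 * n + 1) := by
        rw [mul_assoc]
        gcongr
        nlinarith

lemma integral_mean_node {f : ℝ → ℝ} (hf : Continuous f) (hper : Function.Periodic f (2 * π)) :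
    ∫ s, (2 * n + 1 : ℝ)⁻¹ * ∑ j, f (node n s j) ∂torusMeasure = ∫ x, f x ∂torusMeasure := by
  have hshift : ∀ j, ∫ s, f (node n s j) ∂torusMeasure = ∫ x, f x ∂torusMeasure := fun j =>
    integral_torusMeasure_comp_add hper _
  have hint : ∀ j, Integrable (fun s => f (node n s j)) torusMeasure := fun j =>
    integrable_torusMeasure (hf.comp (continuous_node n j))
  rw [integral_const_mul, integral_finsetSum _ fun j _ => hint j,
    Finset.sum_congr rfl fun j _ => hshift j]
  simp
  field_simp

lemma integrable_prod_abs_rpow_neg {ι : Type*} [Fintype ι] {r : ℝ} (hr : r < Fintype.card ι) :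
    Integrable (fun y : ι → ℝ => ∏ j, |y j| ^ (-(r / Fintype.card ι)))
      (Measure.pi fun _ => gaussianReal 0 1) := by
  refine Integrable.fintype_prod fun j => integrable_abs_rpow_gaussianReal 1 ?_
  have hcard : (0 : ℝ) < Fintype.card ι := by exact_mod_cast Fintype.card_pos_iff.2 ⟨j⟩
  rwa [neg_lt_neg_iff, div_lt_one hcard]

lemma torusLpNorm_rpow_neg_le_integral_prod {f : ℝ → ℝ} (hf : Continuous f)
    (hper : Function.Periodic f (2 * π)) (hf0 : ∀ᵐ s ∂torusMeasure, ∀ j, f (node n s j) ≠ 0)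
    (hp : 0 < p) {r : ℝ} (hr : 0 ≤ r)
    (hprod : Integrable (fun s => ∏ j, |f (node n s j)| ^ (-(r / (2 * n + 1)))) torusMeasure) :
    torusLpNorm p f ^ (-r) ≤
      ∫ s, ∏ j, |f (node n s j)| ^ (-(r / (2 * n + 1))) ∂torusMeasure := by
  have hpow : Continuous fun x => |f x| ^ p := hf.abs.rpow_const fun _ => .inr hp.le
  have hpow_per : Function.Periodic (fun x => |f x| ^ p) (2 * π) := fun x => by
    simp only [hper x]
  have hmean : Integrable (fun s => (2 * n + 1 : ℝ)⁻¹ * ∑ j, |f (node n s j)| ^ p)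
      torusMeasure :=
    integrable_torusMeasure (continuous_const.mul (continuous_finsetSum _ fun j _ =>
      hpow.comp (continuous_node n j)))
  have hexp : p⁻¹ * -r = -(r / p) := by ring
  rw [torusLpNorm_eq_integral, ← Real.rpow_mul (by positivity), hexp,
    ← integral_mean_node hpow hpow_per]
  refine rpow_neg_integral_le_integral (by positivity) hmean hprod ?_ ?_
  · filter_upwards [hf0] with s hs
    have hpos : 0 < ∑ j, |f (node n s j)| ^ p :=
      Finset.sum_pos (fun j _ => Real.rpow_pos_of_pos (abs_pos.2 (hs j)) p) Finset.univ_nonempty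
    positivity
  · filter_upwards [hf0] with s hs
    simpa using rpow_neg_mean_rpow_le_prod (fun j => abs_pos.2 (hs j)) hp hr

lemma ae_torusLpNorm_normalizedTrigPoly_rpow_neg_le (hp : 0 < p) {r : ℝ} (hr : 0 ≤ r)
    (hrn : r < 2 * n + 1) :
    ∀ᵐ a ∂coeffMeasure n, torusLpNorm p (normalizedTrigPoly n a) ^ (-r) ≤
      ∫ s, ∏ j, |normalizedTrigPoly n a (node n s j)| ^ (-(r / (2 * n + 1))) ∂torusMeasure := by
  have hprod := integrable_prod_abs_rpow_neg (ι := Fin (2 * n + 1)) (r := r) (by simpa)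
  have hne : ∀ᵐ y ∂coeffMeasure n, ∀ j, y j ≠ 0 :=
    ae_all_iff.2 fun j =>
      (measurePreserving_eval (fun _ => gaussianReal 0 1) j).quasiMeasurePreserving.ae
        (ae_ne_gaussianReal 0 one_ne_zero 0)
  have hmeas := measurable_uncurry_normalizedTrigPoly_node n
  have hpres := measurePreserving_normalizedTrigPoly_node n
  filter_upwards [ae_integrable_comp_of_measurePreserving (τ := torusMeasure) hmeas hpres hprod,
    ae_ae_comp_of_measurePreserving (τ := torusMeasure) hmeas hpres hne] with a hint hne
  exact torusLpNorm_rpow_neg_le_integral_prod (continuous_normalizedTrigPoly a)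
    (normalizedTrigPoly_periodic a) hne hp hr (by simpa using hint)

lemma integral_prod_abs_rpow_neg_le {ι : Type*} [Fintype ι] {r : ℝ} {m : ℕ} (hr : 0 ≤ r)
    (hrm : r < m) (hm : m ≤ Fintype.card ι) :
    ∫ y : ι → ℝ, ∏ j, |y j| ^ (-(r / Fintype.card ι)) ∂Measure.pi (fun _ => gaussianReal 0 1) ≤
      (∫ u, |u| ^ (-(r / m)) ∂gaussianReal 0 1) ^ m := by
  have hroot : ∀ (k : ℕ) (u : ℝ), |u| ^ (-(r / k)) = (|u| ^ (-r)) ^ (k : ℝ)⁻¹ := fun k u => by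
    rw [← Real.rpow_mul (abs_nonneg u), neg_mul, div_eq_mul_inv]
  have hint : ∀ k : ℕ, m ≤ k →
      Integrable (fun u : ℝ => (|u| ^ (-r)) ^ (k : ℝ)⁻¹) (gaussianReal 0 1) := fun k hk => by
    have hrk : r < k := hrm.trans_le (by exact_mod_cast hk)
    simp only [← hroot]
    refine integrable_abs_rpow_gaussianReal 1 ?_
    rwa [neg_lt_neg_iff, div_lt_one (hr.trans_lt hrk)]
  rw [integral_fintype_prod_eq_pow (fun u : ℝ => |u| ^ (-(r / Fintype.card ι)))]
  simp only [hroot]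
  exact integral_rpow_inv_pow_le (by exact_mod_cast hr.trans_lt hrm) hm
    (fun u => by positivity) (hint m le_rfl) (hint _ hm)

lemma integral_torusLpNorm_normalizedTrigPoly_rpow_neg_le (hp : 0 < p) {r : ℝ} (hr : 0 ≤ r)
    {m : ℕ} (hrm : r < m) (hmn : m ≤ 2 * n + 1) :
    Integrable (fun a => torusLpNorm p (normalizedTrigPoly n a) ^ (-r)) (coeffMeasure n) ∧
      ∫ a, torusLpNorm p (normalizedTrigPoly n a) ^ (-r) ∂coeffMeasure n ≤
        (∫ u, |u| ^ (-(r / m)) ∂gaussianReal 0 1) ^ m := by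
  have hrn : r < 2 * n + 1 := hrm.trans_le (by exact_mod_cast hmn)
  have hprod := integrable_prod_abs_rpow_neg (ι := Fin (2 * n + 1)) (r := r) (by simpa)
  have hmeas := measurable_uncurry_normalizedTrigPoly_node n
  have hpres := measurePreserving_normalizedTrigPoly_node n
  have hprod_le := integral_prod_abs_rpow_neg_le (ι := Fin (2 * n + 1)) hr hrm (by simpa)
  have haverage := integrable_integral_comp_of_measurePreserving (τ := torusMeasure) hmeas hpres
    hprod
  rw [← integral_integral_comp_of_measurePreserving (τ := torusMeasure) hmeas hpres hprod]
    at hprod_le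
  simp only [Fintype.card_fin, Nat.cast_add, Nat.cast_mul, Nat.cast_ofNat, Nat.cast_one]
    at hprod_le haverage
  have hle := ae_torusLpNorm_normalizedTrigPoly_rpow_neg_le hp hr hrn
  have hint : Integrable (fun a => torusLpNorm p (normalizedTrigPoly n a) ^ (-r))
      (coeffMeasure n) :=
    haverage.mono' ((continuous_torusLpNorm (continuous_uncurry_normalizedTrigPoly n)
      hp).measurable.pow_const _).aestronglyMeasurable (hle.mono fun a ha => by
        rwa [Real.norm_of_nonneg (Real.rpow_nonneg (torusLpNorm_nonneg _ _) _)])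
  exact ⟨hint, (integral_mono_ae hint haverage hle).trans hprod_le⟩

lemma integral_torusLpNorm_normalizedTrigPoly_le {q : ℝ} (hq : 0 < q) :
    Integrable (fun a => torusLpNorm q (normalizedTrigPoly n a)) (coeffMeasure n) ∧
      ∫ a, torusLpNorm q (normalizedTrigPoly n a) ∂coeffMeasure n ≤
        1 + ∫ u, |u| ^ max q 1 ∂gaussianReal 0 1 := by
  have hmoment : Integrable (fun u : ℝ => |u| ^ max q 1) (gaussianReal 0 1) :=
    integrable_abs_rpow_gaussianReal 1 (by linarith [le_max_right q 1])
  have hle : ∀ a, torusLpNorm q (normalizedTrigPoly n a) ≤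
      1 + ∫ x, |normalizedTrigPoly n a x| ^ max q 1 ∂torusMeasure := fun a =>
    (torusLpNorm_mono (continuous_normalizedTrigPoly a) hq (le_max_left q 1)).trans
      (torusLpNorm_le_one_add_integral _ (le_max_right q 1))
  have hsum : Integrable (fun a => 1 + ∫ x, |normalizedTrigPoly n a x| ^ max q 1 ∂torusMeasure)
      (coeffMeasure n) :=
    (integrable_const 1).add (integrable_integral_comp_normalizedTrigPoly hmoment)
  have hint : Integrable (fun a => torusLpNorm q (normalizedTrigPoly n a)) (coeffMeasure n) :=
    hsum.mono' (continuous_torusLpNorm (continuous_uncurry_normalizedTrigPoly n)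
      hq).aestronglyMeasurable (.of_forall fun a => by
        rw [Real.norm_of_nonneg (torusLpNorm_nonneg _ _)]
        exact hle a)
  refine ⟨hint, (integral_mono hint hsum hle).trans_eq ?_⟩
  rw [integral_add (integrable_const 1) (integrable_integral_comp_normalizedTrigPoly hmoment),
    integral_integral_comp_normalizedTrigPoly hmoment]
  simp

lemma measureReal_supNorm_normalizedTrigPoly_le (n : ℕ) (t : ℝ) :
    (coeffMeasure n).real {a | supNorm (normalizedTrigPoly n a) ≤ t} ≤
      Real.exp (2 + t ^ 2) / (2 * n + 1) := by
  have hsubset : {a | supNorm (normalizedTrigPoly n a) ≤ t} ⊆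
      (fun a j => normalizedTrigPoly n a (node n 0 j)) ⁻¹' Set.Iic fun _ => t := fun a ha j =>
    (le_abs_self _).trans ((abs_le_supNorm (continuous_normalizedTrigPoly a)
      (node_zero_mem_Icc n j)).trans ha)
  calc (coeffMeasure n).real {a | supNorm (normalizedTrigPoly n a) ≤ t}
      ≤ (coeffMeasure n).real
          ((fun a j => normalizedTrigPoly n a (node n 0 j)) ⁻¹' Set.Iic fun _ => t) :=
        measureReal_mono hsubset
    _ = (coeffMeasure n).real (Set.Iic fun _ => t) :=
        (measurePreserving_normalizedTrigPoly_node n 0).measureReal_preimage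
          measurableSet_Iic.nullMeasurableSet
    _ ≤ Real.exp (2 + t ^ 2) / (2 * n + 1) := by
        simpa using measureReal_pi_gaussianReal_Iic_le (ι := Fin (2 * n + 1)) t

end Moments

section Ratios

variable {n : ℕ} {p q : ℝ}

lemma supNorm_normalizedTrigPoly (a : Fin (2 * n + 1) → ℝ) :
    supNorm (normalizedTrigPoly n a) = supNorm (trigPoly n a) / √(2 * n + 1) :=
  supNorm_div _ (Real.sqrt_nonneg _)

lemma torusLpNorm_normalizedTrigPoly (hp : 0 < p) (a : Fin (2 * n + 1) → ℝ) :
    torusLpNorm p (normalizedTrigPoly n a) = torusLpNorm p (trigPoly n a) / √(2 * n + 1) :=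
  torusLpNorm_div _ hp (Real.sqrt_nonneg _)

lemma supNorm_div_torusLpNorm_trigPoly (hp : 0 < p) (a : Fin (2 * n + 1) → ℝ) :
    supNorm (trigPoly n a) / torusLpNorm p (trigPoly n a) =
      supNorm (normalizedTrigPoly n a) / torusLpNorm p (normalizedTrigPoly n a) := by
  rw [supNorm_normalizedTrigPoly, torusLpNorm_normalizedTrigPoly hp,
    div_div_div_cancel_right₀ (by positivity)]

lemma torusLpNorm_div_supNorm_trigPoly (hq : 0 < q) (a : Fin (2 * n + 1) → ℝ) :
    torusLpNorm q (trigPoly n a) / supNorm (trigPoly n a) =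
      torusLpNorm q (normalizedTrigPoly n a) / supNorm (normalizedTrigPoly n a) := by
  rw [supNorm_normalizedTrigPoly, torusLpNorm_normalizedTrigPoly hq,
    div_div_div_cancel_right₀ (by positivity)]

lemma ae_torusLpNorm_trigPoly_pos (n : ℕ) (hp : 0 < p) :
    ∀ᵐ a ∂coeffMeasure n, 0 < torusLpNorm p (trigPoly n a) := by
  filter_upwards [ae_normalizedTrigPoly_zero_ne_zero n] with a ha
  have hpos := torusLpNorm_pos (continuous_normalizedTrigPoly a) hp zero_mem_Icc_two_pi ha
  rw [torusLpNorm_normalizedTrigPoly hp] at hpos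
  exact (div_pos_iff_of_pos_right (by positivity)).1 hpos

lemma ae_supNorm_trigPoly_pos (n : ℕ) : ∀ᵐ a ∂coeffMeasure n, 0 < supNorm (trigPoly n a) := by
  filter_upwards [ae_normalizedTrigPoly_zero_ne_zero n] with a ha
  have hpos := (abs_pos.2 ha).trans_le
    (abs_le_supNorm (continuous_normalizedTrigPoly a) zero_mem_Icc_two_pi)
  rw [supNorm_normalizedTrigPoly] at hpos
  exact (div_pos_iff_of_pos_right (by positivity)).1 hpos

lemma exists_integral_supNorm_div_torusLpNorm_trigPoly_le (hp : 0 < p) :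
    ∃ C, 0 < C ∧ ∀ n : ℕ, 1 ≤ n →
    Integrable (fun a => supNorm (trigPoly n a) / torusLpNorm p (trigPoly n a))
        (coeffMeasure n) ∧
      ∫ a, supNorm (trigPoly n a) / torusLpNorm p (trigPoly n a) ∂coeffMeasure n ≤
        C * √(Real.log (2 * n + 1)) := by
  obtain ⟨C, hC, hsup⟩ := exists_integral_sq_supNorm_normalizedTrigPoly_le
  -- Three samples suffice: `|u| ^ (-2 / 3)` has finite Gaussian mean; `|u| ^ (-2)` has not.
  set D := (∫ u, |u| ^ (-(2 / (3 : ℕ)) : ℝ) ∂gaussianReal 0 1) ^ 3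
  have hD : 0 ≤ D := by positivity
  refine ⟨(C + D) / 2, by positivity, fun n hn => ?_⟩
  obtain ⟨hsup_int, hsup_le⟩ := hsup n hn
  obtain ⟨hinv_int, hinv_le⟩ := integral_torusLpNorm_normalizedTrigPoly_rpow_neg_le (n := n) hp
    zero_le_two (m := 3) (by norm_num) (by omega)
  have hlog := one_le_log_two_mul_add_one hn
  set w := √(Real.log (2 * n + 1))
  have hw : 0 < w := by positivity
  have hw_sq : w * w = Real.log (2 * n + 1) := Real.mul_self_sqrt (by positivity)
  have hcont := continuous_uncurry_normalizedTrigPoly n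
  obtain ⟨hint, hle⟩ := integral_div_le_half_sq_div_add_mul_rpow
    (continuous_supNorm hcont).aestronglyMeasurable
    (continuous_torusLpNorm hcont hp).aestronglyMeasurable (fun _ => supNorm_nonneg _)
    (fun _ => torusLpNorm_nonneg _ _) hsup_int hinv_int hw
  simp only [supNorm_div_torusLpNorm_trigPoly hp]
  refine ⟨hint, hle.trans ?_⟩
  calc ((∫ a, supNorm (normalizedTrigPoly n a) ^ 2 ∂coeffMeasure n) / w +
        w * ∫ a, torusLpNorm p (normalizedTrigPoly n a) ^ (-2 : ℝ) ∂coeffMeasure n) / 2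
      ≤ (C * (w * w) / w + w * D) / 2 := by
        rw [hw_sq]
        gcongr
    _ = (C + D) / 2 * w := by field_simp

lemma integral_torusLpNorm_div_supNorm_trigPoly_le (n : ℕ) (hq : 0 < q) {t : ℝ} (ht : 0 < t) :
    Integrable (fun a => torusLpNorm q (trigPoly n a) / supNorm (trigPoly n a))
        (coeffMeasure n) ∧
      ∫ a, torusLpNorm q (trigPoly n a) / supNorm (trigPoly n a) ∂coeffMeasure n ≤
        Real.exp (2 + t ^ 2) / (2 * n + 1) +
          (1 + ∫ u, |u| ^ max q 1 ∂gaussianReal 0 1) / t := by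
  obtain ⟨hnorm_int, hnorm_le⟩ := integral_torusLpNorm_normalizedTrigPoly_le (n := n) hq
  have hcont := continuous_uncurry_normalizedTrigPoly n
  obtain ⟨hint, hle⟩ := integral_div_le_measureReal_add_integral_div hnorm_int
    (continuous_supNorm hcont).measurable (fun _ => torusLpNorm_nonneg _ _)
    (fun a => torusLpNorm_le_supNorm (continuous_normalizedTrigPoly a) hq) ht
  simp only [torusLpNorm_div_supNorm_trigPoly hq]
  refine ⟨hint, hle.trans ?_⟩
  gcongr
  exact measureReal_supNorm_normalizedTrigPoly_le n t

lemma exists_integral_torusLpNorm_div_supNorm_trigPoly_le (hq : 0 < q) :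
    ∃ C, 0 < C ∧ ∀ n : ℕ, 1 ≤ n →
    Integrable (fun a => torusLpNorm q (trigPoly n a) / supNorm (trigPoly n a))
        (coeffMeasure n) ∧
      ∫ a, torusLpNorm q (trigPoly n a) / supNorm (trigPoly n a) ∂coeffMeasure n ≤
        C * (√(Real.log (2 * n + 1)))⁻¹ := by
  set D := 1 + ∫ u, |u| ^ max q 1 ∂gaussianReal 0 1
  have hD : 0 < D := by positivity
  refine ⟨Real.exp 2 + 2 * D, by positivity, fun n hn => ?_⟩
  have hlog := one_le_log_two_mul_add_one hn
  set w := √(Real.log (2 * n + 1)) with hw_def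
  have hw : 0 < w := by positivity
  have hN : (2 * n + 1 : ℝ) = Real.exp (w ^ 2) := by
    rw [hw_def, Real.sq_sqrt (by positivity), Real.exp_log (by positivity)]
  obtain ⟨hint, hle⟩ := integral_torusLpNorm_div_supNorm_trigPoly_le n hq (half_pos hw)
  have hsmall : Real.exp (2 + (w / 2) ^ 2) / (2 * n + 1) ≤ Real.exp 2 * w⁻¹ :=
    calc Real.exp (2 + (w / 2) ^ 2) / (2 * n + 1) = Real.exp 2 * (Real.exp (3 * w ^ 2 / 4))⁻¹ := by
          rw [hN, ← Real.exp_sub, ← Real.exp_neg, ← Real.exp_add]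
          ring_nf
      _ ≤ Real.exp 2 * w⁻¹ := by
          gcongr
          nlinarith [Real.add_one_le_exp (3 * w ^ 2 / 4), sq_nonneg (w - 1)]
  refine ⟨hint, hle.trans ?_⟩
  calc Real.exp (2 + (w / 2) ^ 2) / (2 * n + 1) + D / (w / 2)
      ≤ Real.exp 2 * w⁻¹ + D / (w / 2) := by gcongr
    _ = (Real.exp 2 + 2 * D) * w⁻¹ := by field_simp

end Ratios

theorem average_nikolskii_sup_norm_general (p q : ℝ) (hp : 0 < p) (hq : 0 < q) :
    (∃ c C : ℝ, 0 < c ∧ 0 < C ∧ ∀ n : ℕ, 1 ≤ n →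
      c * Real.log (2 * n + 1 : ℝ) ^ ((1 : ℝ) / 2) ≤
          (∫ a : Fin (2 * n + 1) → ℝ,
            supNorm (trigPoly n a) / torusLpNorm p (trigPoly n a)
            ∂(Measure.pi fun _ => gaussianReal 0 1)) ∧
        (∫ a : Fin (2 * n + 1) → ℝ,
            supNorm (trigPoly n a) / torusLpNorm p (trigPoly n a)
            ∂(Measure.pi fun _ => gaussianReal 0 1)) ≤
          C * Real.log (2 * n + 1 : ℝ) ^ ((1 : ℝ) / 2)) ∧
    (∃ c C : ℝ, 0 < c ∧ 0 < C ∧ ∀ n : ℕ, 1 ≤ n →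
      c * Real.log (2 * n + 1 : ℝ) ^ (-(1 : ℝ) / 2) ≤
          (∫ a : Fin (2 * n + 1) → ℝ,
            torusLpNorm q (trigPoly n a) / supNorm (trigPoly n a)
            ∂(Measure.pi fun _ => gaussianReal 0 1)) ∧
        (∫ a : Fin (2 * n + 1) → ℝ,
            torusLpNorm q (trigPoly n a) / supNorm (trigPoly n a)
            ∂(Measure.pi fun _ => gaussianReal 0 1)) ≤
          C * Real.log (2 * n + 1 : ℝ) ^ (-(1 : ℝ) / 2)) := by
  have hsqrt : ∀ n : ℕ, Real.log (2 * n + 1) ^ ((1 : ℝ) / 2) = √(Real.log (2 * n + 1)) :=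
    fun n => (Real.sqrt_eq_rpow _).symm
  have hinv : ∀ n : ℕ, Real.log (2 * n + 1) ^ (-(1 : ℝ) / 2) = (√(Real.log (2 * n + 1)))⁻¹ :=
    fun n => by
      rw [neg_div, Real.rpow_neg (Real.log_nonneg (by linarith [n.cast_nonneg (α := ℝ)])), hsqrt]
  simp only [hsqrt, hinv]
  constructor
  · obtain ⟨C, hC, upper⟩ := exists_integral_supNorm_div_torusLpNorm_trigPoly_le hp
    obtain ⟨D, hD, lower⟩ := exists_integral_torusLpNorm_div_supNorm_trigPoly_le hp
    refine ⟨D⁻¹, C, inv_pos.2 hD, hC, fun n hn => ⟨?_, (upper n hn).2⟩⟩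
    simpa using inv_mul_inv_le_integral_div (ae_torusLpNorm_trigPoly_pos n hp)
      (ae_supNorm_trigPoly_pos n) (lower n hn).1 (upper n hn).1 (lower n hn).2
  · obtain ⟨C, hC, upper⟩ := exists_integral_torusLpNorm_div_supNorm_trigPoly_le hq
    obtain ⟨D, hD, lower⟩ := exists_integral_supNorm_div_torusLpNorm_trigPoly_le hq
    refine ⟨D⁻¹, C, inv_pos.2 hD, hC, fun n hn => ⟨?_, (upper n hn).2⟩⟩
    exact inv_mul_inv_le_integral_div (ae_supNorm_trigPoly_pos n)
      (ae_torusLpNorm_trigPoly_pos n hq) (lower n hn).1 (upper n hn).1 (lower n hn).2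

/-- For `1 ≤ p < ∞`, `E[‖T_a‖_∞ / ‖T_a‖_p] ≍ (log N)^{1/2}`, and for `1 ≤ q < ∞`,
`E[‖T_a‖_q / ‖T_a‖_∞] ≍ (log N)^{-1/2}`, where `N = 2n+1`. -/
theorem average_nikolskii_sup_norm (p q : ℝ) (hp : 1 ≤ p) (hq : 1 ≤ q) :
    (∃ c C : ℝ, 0 < c ∧ 0 < C ∧ ∀ n : ℕ, 1 ≤ n →
      c * Real.log (2 * n + 1 : ℝ) ^ ((1 : ℝ) / 2) ≤
          (∫ a : Fin (2 * n + 1) → ℝ,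
            supNorm (trigPoly n a) / torusLpNorm p (trigPoly n a)
            ∂(Measure.pi fun _ => gaussianReal 0 1)) ∧
        (∫ a : Fin (2 * n + 1) → ℝ,
            supNorm (trigPoly n a) / torusLpNorm p (trigPoly n a)
            ∂(Measure.pi fun _ => gaussianReal 0 1)) ≤
          C * Real.log (2 * n + 1 : ℝ) ^ ((1 : ℝ) / 2)) ∧
    (∃ c C : ℝ, 0 < c ∧ 0 < C ∧ ∀ n : ℕ, 1 ≤ n →
      c * Real.log (2 * n + 1 : ℝ) ^ (-(1 : ℝ) / 2) ≤
          (∫ a : Fin (2 * n + 1) → ℝ,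
            torusLpNorm q (trigPoly n a) / supNorm (trigPoly n a)
            ∂(Measure.pi fun _ => gaussianReal 0 1)) ∧
        (∫ a : Fin (2 * n + 1) → ℝ,
            torusLpNorm q (trigPoly n a) / supNorm (trigPoly n a)
            ∂(Measure.pi fun _ => gaussianReal 0 1)) ≤
          C * Real.log (2 * n + 1 : ℝ) ^ (-(1 : ℝ) / 2)) :=
  average_nikolskii_sup_norm_general p q (by linarith) (by linarith)
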